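/- Let α ∈ [0,1] and f ∈ C^α(ℝ^d). Then there is a constant N depending only on H, c, α, d such that for every t ∈ (0,1] and all x₁, x₂, x₃, x₄ ∈ ℝ^d, |P_t^H f(x₁) − P_t^H f(x₂) − P_t^H f(x₃) + P_t^H f(x₄)| ≤ N ‖f‖_{C^α} ( t^{H(α−2)} |x₁−x₂| |x₁−x₃| + t^{H(α−1)} |x₁−x₂−x₃+x₄| ). -/

import Mathlib

open MeasureTheory Filter Set

noncomputable section

/-- `ℝ^d` as Euclidean space. -/
abbrev Euc (d : ℕ) := EuclideanSpace ℝ (Fin d)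

/-- Gaussian density with covariance `σ` times the identity on `ℝ^d`. -/
def gaussDensity (d : ℕ) (σ : ℝ) (x : Euc d) : ℝ :=
  (2 * Real.pi * σ) ^ (-(d : ℝ) / 2) * Real.exp (-‖x‖ ^ 2 / (2 * σ))

/-- The Gaussian convolution operator `P_t^H f = p_{c t^{2H}} ∗ f`. -/
def heatP (d : ℕ) (c H t : ℝ) (f : Euc d → ℝ) (x : Euc d) : ℝ :=
  ∫ y, gaussDensity d (c * t ^ (2 * H)) (x - y) * f y

/-- The `C^α` norm (`α ∈ [0,1]`): supremum norm plus `α`-Hölder seminorm.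
(For `α = 0` this is comparable to the supremum norm.) -/
def holderNorm (d : ℕ) (α : ℝ) (f : Euc d → ℝ) : ℝ :=
  (⨆ x, |f x|) +
    ⨆ q : {q : Euc d × Euc d // q.1 ≠ q.2}, |f q.1.1 - f q.1.2| / ‖q.1.1 - q.1.2‖ ^ α

end

/-!
Write `P_σ` for convolution with the Gaussian density `p_σ` of variance `σ`, and let `f` be
`α`-Hölder. First differences obey `|P_σ f (x + h) - P_σ f x| ≲ σ^((α-1)/2) |h|`. For `|h| ≥ √σ`
this holds because convolution with a probability density preserves the Hölder bound. For
`|h| ≤ √σ` it follows by integrating `p_σ (x + h - y) - p_σ (x - y)`, which is at most a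
multiple of `|h| / √σ` times a Gaussian of larger variance, against `f y - f x`: subtracting `f x`
is free because the kernel difference has zero mass.

Since `P_{2σ} = P_σ P_σ`, a second difference of `P_{2σ} f` with increments `h` and `k` is the first
difference with increment `h` of `P_σ g`, where `g z = P_σ f (z + k) - P_σ f z` is bounded by a
multiple of `σ^((α-1)/2) |k|`. The first-order bound applied to `g` with exponent `0` supplies the
remaining factor `σ^(-1/2) |h|`. The theorem compares `x₄` with the fourth vertex `x₂ + x₃ - x₁` of
the parallelogram by one more first difference.
-/

open Module ContinuousLinearMap
open scoped NNReal Convolution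

section Inequalities

lemma abs_exp_sub_exp_le {a b m : ℝ} (ha : a ≤ m) (hb : b ≤ m) :
    |Real.exp a - Real.exp b| ≤ Real.exp m * |a - b| := by
  have hlip := (convex_Iic m).norm_image_sub_le_of_norm_deriv_le (f := Real.exp) (C := Real.exp m)
    (fun x _ ↦ Real.differentiableAt_exp) (fun x hx ↦ by simpa using hx) hb ha
  simpa only [Real.norm_eq_abs] using hlip

lemma rpow_le_rpow_mul_one_add_div {r s α : ℝ} (hr : 0 ≤ r) (hs : 0 < s) (hα₀ : 0 ≤ α)
    (hα₁ : α ≤ 1) : r ^ α ≤ s ^ α * (1 + r / s) := by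
  have hu : 0 ≤ r / s := by positivity
  calc r ^ α = s ^ α * (r / s) ^ α := by
        rw [← Real.mul_rpow hs.le hu, mul_div_cancel₀ _ hs.ne']
    _ ≤ s ^ α * (1 + r / s) ^ α := by gcongr; linarith
    _ ≤ s ^ α * (1 + r / s) := by
        gcongr
        exact Real.rpow_le_self_of_one_le (by linarith) hα₁

lemma one_add_sq_mul_exp_neg_sq_div_four_le (u : ℝ) :
    (1 + u) ^ 2 * Real.exp (-u ^ 2 / 4) ≤ 16 * Real.exp (-u ^ 2 / 8) := by
  have hpoly : (1 + u) ^ 2 ≤ 16 * Real.exp (u ^ 2 / 8) := by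
    nlinarith [Real.add_one_le_exp (u ^ 2 / 8), sq_nonneg (1 - u)]
  calc (1 + u) ^ 2 * Real.exp (-u ^ 2 / 4)
      ≤ 16 * Real.exp (u ^ 2 / 8) * Real.exp (-u ^ 2 / 4) := by gcongr
    _ = 16 * Real.exp (-u ^ 2 / 8) := by rw [mul_assoc, ← Real.exp_add]; ring_nf

lemma sqrt_half_rpow_sub_two_le {σ α : ℝ} (hσ : 0 ≤ σ) (hα : 0 ≤ α) :
    √(σ / 2) ^ (α - 2) ≤ 2 * √σ ^ (α - 2) := by
  have htwo : (√2 ^ (α - 2))⁻¹ ≤ 2 :=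
    calc (√2 ^ (α - 2))⁻¹ = √2 ^ (2 - α) := by
          rw [← Real.rpow_neg (Real.sqrt_nonneg 2), neg_sub]
      _ ≤ √2 ^ (2 : ℝ) :=
          Real.rpow_le_rpow_of_exponent_le (Real.one_le_sqrt.2 one_le_two) (by linarith)
      _ = 2 := by norm_num
  rw [Real.sqrt_div hσ, Real.div_rpow (Real.sqrt_nonneg σ) (Real.sqrt_nonneg 2), div_eq_mul_inv,
    mul_comm]
  gcongr

lemma neg_norm_add_sq_div_le {E : Type*} [SeminormedAddCommGroup E] {σ : ℝ} (hσ : 0 < σ) {h : E}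
    (hh : ‖h‖ ≤ √σ) (x : E) :
    -‖x + h‖ ^ 2 / (2 * σ) ≤ 1 / 2 + -‖x‖ ^ 2 / (4 * σ) := by
  have htri : ‖x‖ ≤ ‖x + h‖ + √σ :=
    (norm_le_add_norm_add x h).trans (by gcongr)
  have hsq : ‖x‖ ^ 2 ≤ 2 * ‖x + h‖ ^ 2 + 2 * σ := by
    nlinarith [norm_nonneg x, sq_nonneg (‖x + h‖ - √σ), Real.sq_sqrt hσ.le]
  have hdiff : 1 / 2 + -‖x‖ ^ 2 / (4 * σ) - -‖x + h‖ ^ 2 / (2 * σ) =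
      (2 * ‖x + h‖ ^ 2 + 2 * σ - ‖x‖ ^ 2) / (4 * σ) := by
    field_simp
    ring
  rw [← sub_nonneg, hdiff]
  exact div_nonneg (sub_nonneg.2 hsq) (by positivity)

lemma sqrt_mul_rpow_two_mul_rpow {c t : ℝ} (hc : 0 ≤ c) (ht : 0 ≤ t) (H β : ℝ) :
    √(c * t ^ (2 * H)) ^ β = √c ^ β * t ^ (H * β) := by
  have hsqrt : √(t ^ (2 * H)) = t ^ H := by
    rw [Real.sqrt_eq_rpow, ← Real.rpow_mul ht]
    ring_nf
  rw [Real.sqrt_mul hc, hsqrt, Real.mul_rpow (Real.sqrt_nonneg c) (by positivity),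
    ← Real.rpow_mul ht]

end Inequalities

section GaussianKernel

variable {E : Type*} [NormedAddCommGroup E] [InnerProductSpace ℝ E] {σ : ℝ}

/-- The centred Gaussian density on `E` with covariance `σ` times the identity. -/
noncomputable def gaussianKernel (σ : ℝ) (x : E) : ℝ :=
  (2 * Real.pi * σ) ^ (-(finrank ℝ E : ℝ) / 2) * Real.exp (-‖x‖ ^ 2 / (2 * σ))

lemma gaussianKernel_nonneg (hσ : 0 ≤ σ) (x : E) : 0 ≤ gaussianKernel σ x := by
  unfold gaussianKernel; positivity

lemma continuous_gaussianKernel : Continuous (gaussianKernel σ : E → ℝ) := by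
  unfold gaussianKernel; fun_prop

lemma gaussianKernel_mul_gaussianKernel_sub (hσ : 0 < σ) (x y : E) :
    gaussianKernel σ y * gaussianKernel σ (x - y) =
      gaussianKernel (2 * σ) x * gaussianKernel (σ / 2) (y - (1 / 2 : ℝ) • x) := by
  have hnorm : ‖y‖ ^ 2 + ‖x - y‖ ^ 2 = ‖x‖ ^ 2 / 2 + 2 * ‖y - (1 / 2 : ℝ) • x‖ ^ 2 := by
    rw [norm_sub_sq_real, norm_sub_sq_real, real_inner_smul_right, norm_smul, real_inner_comm,
      Real.norm_of_nonneg one_half_pos.le]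
    ring
  have hconst : (2 * Real.pi * σ) * (2 * Real.pi * σ) =
      (2 * Real.pi * (2 * σ)) * (2 * Real.pi * (σ / 2)) := by ring
  have hexp : -‖y‖ ^ 2 / (2 * σ) + -‖x - y‖ ^ 2 / (2 * σ) =
      -‖x‖ ^ 2 / (2 * (2 * σ)) + -‖y - (1 / 2 : ℝ) • x‖ ^ 2 / (2 * (σ / 2)) := by
    field_simp
    linear_combination -2 * hnorm
  unfold gaussianKernel
  rw [mul_mul_mul_comm, ← Real.exp_add, hexp, ← Real.mul_rpow (by positivity) (by positivity),
    hconst, Real.mul_rpow (by positivity) (by positivity), Real.exp_add, mul_mul_mul_comm]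

lemma one_add_norm_div_sqrt_sq_mul_le (hσ : 0 < σ) (x : E) :
    (2 * Real.pi * σ) ^ (-(finrank ℝ E : ℝ) / 2) *
        ((1 + ‖x‖ / √σ) ^ 2 * Real.exp (-‖x‖ ^ 2 / (4 * σ))) ≤
      2 ^ (finrank ℝ E + 4) * gaussianKernel (4 * σ) x := by
  have hconst : (2 * Real.pi * σ) ^ (-(finrank ℝ E : ℝ) / 2) =
      2 ^ finrank ℝ E * (2 * Real.pi * (4 * σ)) ^ (-(finrank ℝ E : ℝ) / 2) := by
    have hfour : (4 : ℝ) ^ (-(finrank ℝ E : ℝ) / 2) = (2 ^ finrank ℝ E)⁻¹ := by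
      rw [show (4 : ℝ) = 2 ^ (2 : ℝ) by norm_num, ← Real.rpow_mul two_pos.le,
        mul_div_cancel₀ _ two_ne_zero, Real.rpow_neg two_pos.le, Real.rpow_natCast]
    rw [show 2 * Real.pi * (4 * σ) = 4 * (2 * Real.pi * σ) by ring,
      Real.mul_rpow (x := 4) (by positivity) (by positivity), hfour,
      mul_inv_cancel_left₀ (by positivity)]
  have hbound : (1 + ‖x‖ / √σ) ^ 2 * Real.exp (-‖x‖ ^ 2 / (4 * σ)) ≤
      16 * Real.exp (-‖x‖ ^ 2 / (2 * (4 * σ))) := by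
    convert one_add_sq_mul_exp_neg_sq_div_four_le (‖x‖ / √σ) using 3 <;>
      · rw [div_pow, Real.sq_sqrt hσ.le]
        ring
  calc _ ≤ (2 * Real.pi * σ) ^ (-(finrank ℝ E : ℝ) / 2) *
        (16 * Real.exp (-‖x‖ ^ 2 / (2 * (4 * σ)))) := by gcongr
    _ = 2 ^ (finrank ℝ E + 4) * gaussianKernel (4 * σ) x := by
        rw [hconst, gaussianKernel, pow_add]
        ring

lemma gaussianKernel_mul_norm_rpow_le {α : ℝ} (hσ : 0 < σ) (hα₀ : 0 ≤ α) (hα₁ : α ≤ 1) (x : E) :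
    gaussianKernel σ x * ‖x‖ ^ α ≤
      2 ^ (finrank ℝ E + 4) * √σ ^ α * gaussianKernel (4 * σ) x := by
  have hrpow := rpow_le_rpow_mul_one_add_div (norm_nonneg x) (Real.sqrt_pos.2 hσ) hα₀ hα₁
  have hsq : 1 + ‖x‖ / √σ ≤ (1 + ‖x‖ / √σ) ^ 2 :=
    le_self_pow₀ (by simpa using by positivity) two_ne_zero
  have hexp : -‖x‖ ^ 2 / (2 * σ) ≤ -‖x‖ ^ 2 / (4 * σ) := by
    rw [div_le_div_iff₀ (by positivity) (by positivity)]
    nlinarith [mul_nonneg hσ.le (sq_nonneg ‖x‖)]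
  calc gaussianKernel σ x * ‖x‖ ^ α
      ≤ (2 * Real.pi * σ) ^ (-(finrank ℝ E : ℝ) / 2) * Real.exp (-‖x‖ ^ 2 / (4 * σ)) *
          (√σ ^ α * (1 + ‖x‖ / √σ) ^ 2) := by
        unfold gaussianKernel
        gcongr
        exact hrpow.trans (by gcongr)
    _ = √σ ^ α * ((2 * Real.pi * σ) ^ (-(finrank ℝ E : ℝ) / 2) *
          ((1 + ‖x‖ / √σ) ^ 2 * Real.exp (-‖x‖ ^ 2 / (4 * σ)))) := by ring
    _ ≤ √σ ^ α * (2 ^ (finrank ℝ E + 4) * gaussianKernel (4 * σ) x) := by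
        exact mul_le_mul_of_nonneg_left (one_add_norm_div_sqrt_sq_mul_le hσ x) (by positivity)
    _ = _ := by ring

lemma abs_norm_add_sq_sub_norm_sq_le (x h : E) :
    |‖x + h‖ ^ 2 - ‖x‖ ^ 2| ≤ ‖h‖ * (2 * ‖x‖ + ‖h‖) := by
  have hinner := abs_le.1 (abs_real_inner_le_norm x h)
  rw [norm_add_sq_real, abs_le]
  constructor <;> nlinarith [sq_nonneg ‖h‖]

lemma abs_exp_neg_norm_add_sq_sub_le (hσ : 0 < σ) {h : E} (hh : ‖h‖ ≤ √σ) (x : E) :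
    |Real.exp (-‖x + h‖ ^ 2 / (2 * σ)) - Real.exp (-‖x‖ ^ 2 / (2 * σ))| ≤
      2 * (‖h‖ / √σ) * ((1 + ‖x‖ / √σ) * Real.exp (-‖x‖ ^ 2 / (4 * σ))) := by
  have hs : 0 < √σ := Real.sqrt_pos.2 hσ
  have hle : -‖x‖ ^ 2 / (2 * σ) ≤ 1 / 2 + -‖x‖ ^ 2 / (4 * σ) := by
    simpa using neg_norm_add_sq_div_le hσ (h := 0) (by simp) x
  have hexponent : |-‖x + h‖ ^ 2 / (2 * σ) - -‖x‖ ^ 2 / (2 * σ)| ≤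
      ‖h‖ / √σ * (1 + ‖x‖ / √σ) := by
    rw [← sub_div, abs_div, abs_of_pos (by positivity : 0 < 2 * σ), neg_sub_neg, abs_sub_comm]
    calc |‖x + h‖ ^ 2 - ‖x‖ ^ 2| / (2 * σ)
        ≤ ‖h‖ * (2 * ‖x‖ + ‖h‖) / (2 * σ) := by grw [abs_norm_add_sq_sub_norm_sq_le]
      _ ≤ ‖h‖ * (2 * ‖x‖ + 2 * √σ) / (2 * √σ ^ 2) := by
        rw [Real.sq_sqrt hσ.le]
        gcongr
        linarith
      _ = ‖h‖ / √σ * (1 + ‖x‖ / √σ) := by field_simp; ring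
  have hexp_half : Real.exp (1 / 2) ≤ 2 :=
    (Real.exp_bound_div_one_sub_of_interval (by norm_num) (by norm_num)).trans_eq (by norm_num)
  calc |Real.exp (-‖x + h‖ ^ 2 / (2 * σ)) - Real.exp (-‖x‖ ^ 2 / (2 * σ))|
      ≤ Real.exp (1 / 2 + -‖x‖ ^ 2 / (4 * σ)) * (‖h‖ / √σ * (1 + ‖x‖ / √σ)) :=
        (abs_exp_sub_exp_le (neg_norm_add_sq_div_le hσ hh x) hle).trans (by gcongr)
    _ = Real.exp (1 / 2) * (‖h‖ / √σ * (1 + ‖x‖ / √σ) * Real.exp (-‖x‖ ^ 2 / (4 * σ))) := by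
        rw [Real.exp_add]; ring
    _ ≤ 2 * (‖h‖ / √σ * (1 + ‖x‖ / √σ) * Real.exp (-‖x‖ ^ 2 / (4 * σ))) := by gcongr
    _ = _ := by ring

lemma abs_gaussianKernel_add_sub_mul_norm_rpow_le {α : ℝ} (hσ : 0 < σ) (hα₀ : 0 ≤ α)
    (hα₁ : α ≤ 1) {h : E} (hh : ‖h‖ ≤ √σ) (x : E) :
    |gaussianKernel σ (x + h) - gaussianKernel σ x| * ‖x‖ ^ α ≤
      2 ^ (finrank ℝ E + 5) * √σ ^ (α - 1) * ‖h‖ * gaussianKernel (4 * σ) x := by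
  have hs : 0 < √σ := Real.sqrt_pos.2 hσ
  set Z : ℝ := (2 * Real.pi * σ) ^ (-(finrank ℝ E : ℝ) / 2) with hZ
  have hZ₀ : 0 ≤ Z := by positivity
  calc |gaussianKernel σ (x + h) - gaussianKernel σ x| * ‖x‖ ^ α
      = Z * |Real.exp (-‖x + h‖ ^ 2 / (2 * σ)) - Real.exp (-‖x‖ ^ 2 / (2 * σ))| * ‖x‖ ^ α := by
        rw [gaussianKernel, gaussianKernel, ← hZ, ← mul_sub, abs_mul, abs_of_nonneg hZ₀]
    _ ≤ Z * (2 * (‖h‖ / √σ) * ((1 + ‖x‖ / √σ) * Real.exp (-‖x‖ ^ 2 / (4 * σ)))) *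
          (√σ ^ α * (1 + ‖x‖ / √σ)) := by
        gcongr
        · exact abs_exp_neg_norm_add_sq_sub_le hσ hh x
        · exact rpow_le_rpow_mul_one_add_div (norm_nonneg x) hs hα₀ hα₁
    _ = 2 * (√σ ^ α * (‖h‖ / √σ)) *
          (Z * ((1 + ‖x‖ / √σ) ^ 2 * Real.exp (-‖x‖ ^ 2 / (4 * σ)))) := by ring
    _ ≤ 2 * (√σ ^ α * (‖h‖ / √σ)) * (2 ^ (finrank ℝ E + 4) * gaussianKernel (4 * σ) x) :=
        mul_le_mul_of_nonneg_left (one_add_norm_div_sqrt_sq_mul_le hσ x) (by positivity)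
    _ = _ := by
        rw [Real.rpow_sub_one hs.ne']
        ring

variable [FiniteDimensional ℝ E] [MeasurableSpace E] [BorelSpace E]

lemma integral_gaussianKernel (hσ : 0 < σ) : ∫ x : E, gaussianKernel σ x = 1 := by
  have hexp : ∀ x : E, -‖x‖ ^ 2 / (2 * σ) = -(1 / (2 * σ)) * ‖x‖ ^ 2 := fun x ↦ by ring
  simp only [gaussianKernel, hexp]
  rw [integral_const_mul, GaussianFourier.integral_rexp_neg_mul_sq_norm (by positivity),
    div_div_eq_mul_div, div_one, neg_div, Real.rpow_neg (by positivity),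
    show Real.pi * (2 * σ) = 2 * Real.pi * σ by ring]
  exact inv_mul_cancel₀ (by positivity)

lemma integrable_gaussianKernel (hσ : 0 < σ) : Integrable (gaussianKernel σ : E → ℝ) :=
  .of_integral_ne_zero <| by simp [integral_gaussianKernel hσ]

lemma gaussianKernel_convolution_self (hσ : 0 < σ) :
    (gaussianKernel σ : E → ℝ) ⋆[lsmul ℝ ℝ, volume] gaussianKernel σ = gaussianKernel (2 * σ) := by
  ext x
  simp only [convolution_lsmul, smul_eq_mul, gaussianKernel_mul_gaussianKernel_sub hσ]
  rw [integral_const_mul, integral_sub_right_eq_self (gaussianKernel (σ / 2)),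
    integral_gaussianKernel (half_pos hσ), mul_one]

end GaussianKernel

section HolderWith

variable {X Y : Type*} [PseudoMetricSpace X] {K α : ℝ≥0}

lemma holderWith_of_dist_le [PseudoMetricSpace Y] {f : X → Y}
    (hf : ∀ x y, dist (f x) (f y) ≤ K * dist x y ^ (α : ℝ)) : HolderWith K α f := fun x y ↦ by
  rw [edist_nndist, edist_nndist, ← ENNReal.coe_rpow_of_nonneg _ α.coe_nonneg]
  exact_mod_cast hf x y

lemma holderWith_zero_of_norm_le [SeminormedAddCommGroup Y] {f : X → Y} (hf : ∀ x, ‖f x‖ ≤ K) :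
    HolderWith (2 * K) 0 f :=
  holderWith_of_dist_le fun x y ↦ by
    simpa [two_mul, dist_eq_norm] using (norm_sub_le _ _).trans (add_le_add (hf x) (hf y))

lemma holderWith_norm [SeminormedAddCommGroup Y] {f : X → Y} (hf : HolderWith K α f) :
    HolderWith K α fun x ↦ ‖f x‖ :=
  holderWith_of_dist_le fun x y ↦ (dist_norm_norm_le _ _).trans (by
    simpa only [dist_eq_norm] using hf.dist_le x y)

lemma holderWith_comp_add_right {E : Type*} [SeminormedAddCommGroup E] [PseudoMetricSpace Y]
    {f : E → Y} (hf : HolderWith K α f) (h : E) : HolderWith K α fun x ↦ f (x + h) :=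
  fun x y ↦ by simpa using hf (x + h) (y + h)

end HolderWith

section GaussianConv

variable {E F : Type*} [NormedAddCommGroup E] [InnerProductSpace ℝ E] [FiniteDimensional ℝ E]
  [MeasurableSpace E] [BorelSpace E] [NormedAddCommGroup F] [NormedSpace ℝ F]
  {f : E → F} {σ : ℝ} {K α : ℝ≥0}

/-- The Gaussian convolution operator `f ↦ p_σ ∗ f`; the variance `σ` plays the role of time. -/
noncomputable def gaussianConv (σ : ℝ) (f : E → F) : E → F :=
  gaussianKernel σ ⋆[lsmul ℝ ℝ, volume] f

lemma convolutionExists_gaussianKernel (hσ : 0 < σ) (hα : α ≤ 1) (hf : HolderWith K α f)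
    (hfm : AEStronglyMeasurable f) :
    ConvolutionExists (gaussianKernel σ) f (lsmul ℝ ℝ) volume := fun x ↦ by
  have hmajorant : Integrable fun v : E ↦
      2 ^ (finrank ℝ E + 4) * √σ ^ (α : ℝ) * gaussianKernel (4 * σ) v * K
        + gaussianKernel σ v * ‖f x‖ :=
    (((integrable_gaussianKernel (by positivity)).const_mul _).mul_const _).add
      ((integrable_gaussianKernel hσ).mul_const _)
  refine hmajorant.mono' ?_ (.of_forall fun v ↦ ?_)
  · exact continuous_gaussianKernel.aestronglyMeasurable.smul
      (hfm.comp_quasiMeasurePreserving (quasiMeasurePreserving_sub_left volume x))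
  have hholder : ‖f (x - v)‖ ≤ K * ‖v‖ ^ (α : ℝ) + ‖f x‖ := by
    have hdist := hf.dist_le (x - v) x
    rw [dist_eq_norm, dist_eq_norm, sub_sub_cancel_left, norm_neg] at hdist
    linarith [norm_sub_norm_le (f (x - v)) (f x)]
  have hp := gaussianKernel_nonneg hσ.le v
  calc ‖lsmul ℝ ℝ (gaussianKernel σ v) (f (x - v))‖
      = gaussianKernel σ v * ‖f (x - v)‖ := by
        rw [lsmul_apply, norm_smul, Real.norm_of_nonneg hp]
    _ ≤ gaussianKernel σ v * (K * ‖v‖ ^ (α : ℝ) + ‖f x‖) := by gcongr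
    _ = gaussianKernel σ v * ‖v‖ ^ (α : ℝ) * K + gaussianKernel σ v * ‖f x‖ := by ring
    _ ≤ _ := by grw [gaussianKernel_mul_norm_rpow_le hσ α.coe_nonneg hα v]

lemma norm_gaussianConv_le (hσ : 0 < σ) {C : ℝ} (hf : ∀ x, ‖f x‖ ≤ C) (x : E) :
    ‖gaussianConv σ f x‖ ≤ C := by
  have hmajorant : Integrable fun v : E ↦ gaussianKernel σ v * C :=
    (integrable_gaussianKernel hσ).mul_const _
  rw [gaussianConv, convolution_lsmul]
  refine (norm_integral_le_of_norm_le hmajorant (.of_forall fun v ↦ ?_)).trans_eq ?_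
  · have hp := gaussianKernel_nonneg hσ.le v
    rw [norm_smul, Real.norm_of_nonneg hp]
    gcongr
    exact hf _
  · rw [integral_mul_const, integral_gaussianKernel hσ, one_mul]

lemma gaussianConv_add_sub_gaussianConv (hσ : 0 < σ) (hα : α ≤ 1) (hf : HolderWith K α f)
    (hfm : AEStronglyMeasurable f) (x h : E) :
    gaussianConv σ f (x + h) - gaussianConv σ f x = gaussianConv σ (fun y ↦ f (y + h) - f y) x := by
  have hshift : AEStronglyMeasurable fun y ↦ f (y + h) :=
    hfm.comp_quasiMeasurePreserving (measurePreserving_add_right volume h).quasiMeasurePreserving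
  have hint_shift :=
    convolutionExists_gaussianKernel hσ hα (holderWith_comp_add_right hf h) hshift x
  have hint := convolutionExists_gaussianKernel hσ hα hf hfm x
  simp only [gaussianConv, convolution_lsmul, smul_sub, add_sub_right_comm]
  exact (integral_sub hint_shift hint).symm

lemma holderWith_gaussianConv (hσ : 0 < σ) (hα : α ≤ 1) (hf : HolderWith K α f)
    (hfm : AEStronglyMeasurable f) : HolderWith K α (gaussianConv σ f) :=
  holderWith_of_dist_le fun x y ↦ by
    have hdiff := gaussianConv_add_sub_gaussianConv hσ hα hf hfm y (x - y)
    rw [add_sub_cancel] at hdiff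
    rw [dist_eq_norm, hdiff]
    refine norm_gaussianConv_le hσ (fun z ↦ ?_) y
    simpa [dist_eq_norm] using hf.dist_le (z + (x - y)) z

variable [CompleteSpace F]

lemma gaussianConv_add_sub_eq_integral (hσ : 0 < σ) (hα : α ≤ 1) (hf : HolderWith K α f)
    (hfm : AEStronglyMeasurable f) (x h : E) :
    gaussianConv σ f (x + h) - gaussianConv σ f x =
      ∫ y, (gaussianKernel σ (x - y + h) - gaussianKernel σ (x - y)) • (f y - f x) := by
  have hint : ∀ z : E, Integrable fun y : E ↦ gaussianKernel σ (z - y) • f y := fun z ↦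
    (convolutionExists_gaussianKernel hσ hα hf hfm z).integrable_swap
  have hint_const : ∀ z : E, Integrable fun y : E ↦ gaussianKernel σ (z - y) • f x := fun z ↦
    ((integrable_gaussianKernel hσ).comp_sub_left z).smul_const _
  have hint_sub : ∀ z : E, Integrable fun y : E ↦ gaussianKernel σ (z - y) • (f y - f x) :=
    fun z ↦ by simp only [smul_sub]; exact (hint z).sub (hint_const z)
  have hmass : ∀ z : E, ∫ y : E, gaussianKernel σ (z - y) • f x = f x := fun z ↦ by
    rw [integral_smul_const, integral_sub_left_eq_self, integral_gaussianKernel hσ, one_smul]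
  have hrecenter : ∀ z : E,
      gaussianConv σ f z - f x = ∫ y, gaussianKernel σ (z - y) • (f y - f x) := fun z ↦ by
    simp only [smul_sub]
    rw [integral_sub (hint z) (hint_const z), hmass, gaussianConv, convolution_lsmul_swap]
  rw [← sub_sub_sub_cancel_right _ _ (f x), hrecenter, hrecenter,
    ← integral_sub (hint_sub _) (hint_sub _)]
  simp only [sub_smul, sub_add_eq_add_sub]

lemma norm_gaussianConv_add_sub_le_of_norm_le (hσ : 0 < σ) (hα : α ≤ 1) (hf : HolderWith K α f)
    (hfm : AEStronglyMeasurable f) (x : E) {h : E} (hh : ‖h‖ ≤ √σ) :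
    ‖gaussianConv σ f (x + h) - gaussianConv σ f x‖ ≤
      2 ^ (finrank ℝ E + 5) * K * √σ ^ (α - 1 : ℝ) * ‖h‖ := by
  set A : ℝ := 2 ^ (finrank ℝ E + 5) * √σ ^ (α - 1 : ℝ) * ‖h‖
  have hmajorant : Integrable fun y : E ↦ A * gaussianKernel (4 * σ) (x - y) * K :=
    (((integrable_gaussianKernel (by positivity)).comp_sub_left x).const_mul _).mul_const _
  rw [gaussianConv_add_sub_eq_integral hσ hα hf hfm]
  refine (norm_integral_le_of_norm_le hmajorant (.of_forall fun y ↦ ?_)).trans_eq ?_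
  · have hholder : ‖f y - f x‖ ≤ K * ‖x - y‖ ^ (α : ℝ) := by
      simpa only [dist_eq_norm, norm_sub_rev y x] using hf.dist_le y x
    rw [norm_smul, Real.norm_eq_abs]
    grw [hholder, mul_left_comm, abs_gaussianKernel_add_sub_mul_norm_rpow_le hσ α.coe_nonneg hα hh,
      mul_comm]
  · rw [integral_mul_const, integral_const_mul, integral_sub_left_eq_self,
      integral_gaussianKernel (by positivity)]
    ring

theorem norm_gaussianConv_add_sub_le (hσ : 0 < σ) (hα : α ≤ 1) (hf : HolderWith K α f)
    (hfm : AEStronglyMeasurable f) (x h : E) :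
    ‖gaussianConv σ f (x + h) - gaussianConv σ f x‖ ≤
      2 ^ (finrank ℝ E + 5) * K * √σ ^ (α - 1 : ℝ) * ‖h‖ := by
  rcases le_total ‖h‖ √σ with hh | hh
  · exact norm_gaussianConv_add_sub_le_of_norm_le hσ hα hf hfm x hh
  have hs : 0 < √σ := Real.sqrt_pos.2 hσ
  have hα' : (α - 1 : ℝ) ≤ 0 := sub_nonpos.2 (mod_cast hα)
  calc ‖gaussianConv σ f (x + h) - gaussianConv σ f x‖
      ≤ K * ‖h‖ ^ (α : ℝ) := by
        simpa [dist_eq_norm] using (holderWith_gaussianConv hσ hα hf hfm).dist_le (x + h) x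
    _ = 1 * K * ‖h‖ ^ (α - 1 : ℝ) * ‖h‖ := by
        rw [Real.rpow_sub_one (hs.trans_le hh).ne', one_mul, mul_assoc,
          div_mul_cancel₀ _ (hs.trans_le hh).ne']
    _ ≤ 2 ^ (finrank ℝ E + 5) * K * √σ ^ (α - 1 : ℝ) * ‖h‖ := by
        gcongr ?_ * K * ?_ * ‖h‖
        · exact one_le_pow₀ one_le_two
        · exact Real.rpow_le_rpow_of_nonpos hs hh hα'

lemma continuous_gaussianConv (hσ : 0 < σ) (hα : α ≤ 1) (hf : HolderWith K α f)
    (hfm : AEStronglyMeasurable f) : Continuous (gaussianConv σ f) := by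
  refine (LipschitzWith.of_dist_le' (K := 2 ^ (finrank ℝ E + 5) * K * √σ ^ (α - 1 : ℝ))
    fun x y ↦ ?_).continuous
  simpa only [add_sub_cancel, dist_eq_norm] using
    norm_gaussianConv_add_sub_le hσ hα hf hfm y (x - y)

lemma gaussianConv_gaussianConv (hσ : 0 < σ) (hα : α ≤ 1) (hf : HolderWith K α f)
    (hfm : AEStronglyMeasurable f) :
    gaussianConv σ (gaussianConv σ f) = gaussianConv (2 * σ) f := by
  ext x
  have hnorm : HolderWith K α fun y ↦ ‖f y‖ := holderWith_norm hf
  have hkernel : (fun y : E ↦ ‖gaussianKernel σ y‖) = gaussianKernel σ :=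
    funext fun y ↦ Real.norm_of_nonneg (gaussianKernel_nonneg hσ.le y)
  have hkernelm : AEStronglyMeasurable (gaussianKernel σ : E → ℝ) :=
    continuous_gaussianKernel.aestronglyMeasurable
  rw [gaussianConv, gaussianConv, gaussianConv, ← gaussianKernel_convolution_self hσ]
  refine (convolution_assoc (lsmul ℝ ℝ) (lsmul ℝ ℝ) (lsmul ℝ ℝ) (lsmul ℝ ℝ)
    (fun a b v ↦ smul_assoc a b v) hkernelm hkernelm hfm ?_ ?_ ?_).symm
  · exact (integrable_gaussianKernel hσ).ae_convolution_exists _ (integrable_gaussianKernel hσ)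
  · rw [hkernel]
    exact .of_forall (convolutionExists_gaussianKernel hσ hα hnorm hfm.norm)
  · rw [hkernel]
    exact convolutionExists_gaussianKernel hσ hα (holderWith_gaussianConv hσ hα hnorm hfm.norm)
      (continuous_gaussianConv hσ hα hnorm hfm.norm).aestronglyMeasurable x

theorem norm_gaussianConv_two_mul_second_difference_le (hσ : 0 < σ) (hα : α ≤ 1)
    (hf : HolderWith K α f) (hfm : AEStronglyMeasurable f) (x h k : E) :
    ‖gaussianConv (2 * σ) f (x + h + k) - gaussianConv (2 * σ) f (x + h)
        - gaussianConv (2 * σ) f (x + k) + gaussianConv (2 * σ) f x‖ ≤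
      2 ^ (2 * finrank ℝ E + 11) * K * √σ ^ (α - 2 : ℝ) * ‖h‖ * ‖k‖ := by
  set u := gaussianConv σ f
  have hu : HolderWith K α u := holderWith_gaussianConv hσ hα hf hfm
  have hcont : Continuous u := continuous_gaussianConv hσ hα hf hfm
  have hdiff : ∀ y, gaussianConv (2 * σ) f (y + k) - gaussianConv (2 * σ) f y =
      gaussianConv σ (fun z ↦ u (z + k) - u z) y := fun y ↦ by
    rw [← gaussianConv_gaussianConv hσ hα hf hfm]
    exact gaussianConv_add_sub_gaussianConv hσ hα hu hcont.aestronglyMeasurable y k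
  obtain ⟨B, hB⟩ : ∃ B : ℝ≥0, (B : ℝ) = 2 ^ (finrank ℝ E + 5) * K * √σ ^ (α - 1 : ℝ) * ‖k‖ :=
    ⟨⟨_, by positivity⟩, rfl⟩
  have hbdd : HolderWith (2 * B) 0 fun z ↦ u (z + k) - u z := holderWith_zero_of_norm_le fun z ↦
    (norm_gaussianConv_add_sub_le hσ hα hf hfm z k).trans_eq hB.symm
  have hrpow : √σ ^ (α - 2 : ℝ) = √σ ^ (α - 1 : ℝ) * √σ ^ (0 - 1 : ℝ) := by
    rw [← Real.rpow_add (Real.sqrt_pos.2 hσ)]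
    ring_nf
  calc _ = ‖gaussianConv σ (fun z ↦ u (z + k) - u z) (x + h) -
          gaussianConv σ (fun z ↦ u (z + k) - u z) x‖ := by
        rw [← hdiff, ← hdiff]
        congr 1
        abel
    _ ≤ 2 ^ (finrank ℝ E + 5) * (2 * B : ℝ≥0) * √σ ^ (((0 : ℝ≥0) : ℝ) - 1) * ‖h‖ :=
        norm_gaussianConv_add_sub_le hσ zero_le_one hbdd (by fun_prop) x h
    _ = _ := by
        push_cast
        rw [hB, hrpow]
        ring

theorem norm_gaussianConv_sub_sub_add_le (hσ : 0 < σ) (hα : α ≤ 1) (hf : HolderWith K α f)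
    (hfm : AEStronglyMeasurable f) (x₁ x₂ x₃ x₄ : E) :
    ‖gaussianConv σ f x₁ - gaussianConv σ f x₂ - gaussianConv σ f x₃ + gaussianConv σ f x₄‖ ≤
      2 ^ (2 * finrank ℝ E + 12) * K * (√σ ^ (α - 2 : ℝ) * ‖x₁ - x₂‖ * ‖x₁ - x₃‖ +
        √σ ^ (α - 1 : ℝ) * ‖x₁ - x₂ - x₃ + x₄‖) := by
  set P := gaussianConv σ f with hP
  set w := x₂ + x₃ - x₁
  have hsecond : ‖P w - P x₂ - P x₃ + P x₁‖ ≤ 2 ^ (2 * finrank ℝ E + 12) * K *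
      (√σ ^ (α - 2 : ℝ) * ‖x₁ - x₂‖ * ‖x₁ - x₃‖) := by
    have hdiff := norm_gaussianConv_two_mul_second_difference_le (half_pos hσ) hα hf hfm
      x₁ (x₂ - x₁) (x₃ - x₁)
    rw [mul_div_cancel₀ σ two_ne_zero, ← hP, add_sub_cancel, add_sub_cancel, ← add_sub_assoc,
      norm_sub_rev x₂, norm_sub_rev x₃] at hdiff
    grw [hdiff, sqrt_half_rpow_sub_two_le hσ.le α.coe_nonneg]
    exact le_of_eq (by ring)
  have hfirst : ‖P x₄ - P w‖ ≤ 2 ^ (2 * finrank ℝ E + 12) * K *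
      (√σ ^ (α - 1 : ℝ) * ‖x₁ - x₂ - x₃ + x₄‖) := by
    have hdiff := norm_gaussianConv_add_sub_le hσ hα hf hfm w (x₁ - x₂ - x₃ + x₄)
    rw [← hP, show w + (x₁ - x₂ - x₃ + x₄) = x₄ by simp only [w]; abel] at hdiff
    have hexponent : finrank ℝ E + 5 ≤ 2 * finrank ℝ E + 12 := by lia
    grw [hdiff, hexponent]
    · exact le_of_eq (by ring)
    · exact one_le_two
  calc ‖P x₁ - P x₂ - P x₃ + P x₄‖ = ‖(P w - P x₂ - P x₃ + P x₁) + (P x₄ - P w)‖ := by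
        congr 1; abel
    _ ≤ _ := (norm_add_le_of_le hsecond hfirst).trans_eq (mul_add _ _ _).symm

theorem heat_second_difference_estimate_general {c : ℝ} (hc : 0 < c) (hα : α ≤ 1) :
    ∃ N : ℝ, ∀ (H : ℝ) (K : ℝ≥0) (f : E → F), AEStronglyMeasurable f → HolderWith K α f →
      ∀ t : ℝ, 0 < t → ∀ x₁ x₂ x₃ x₄ : E,
        ‖gaussianConv (c * t ^ (2 * H)) f x₁ - gaussianConv (c * t ^ (2 * H)) f x₂
            - gaussianConv (c * t ^ (2 * H)) f x₃ + gaussianConv (c * t ^ (2 * H)) f x₄‖ ≤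
          N * K * (t ^ (H * (α - 2 : ℝ)) * ‖x₁ - x₂‖ * ‖x₁ - x₃‖ +
            t ^ (H * (α - 1 : ℝ)) * ‖x₁ - x₂ - x₃ + x₄‖) := by
  set M : ℝ := √c ^ (α - 2 : ℝ) + √c ^ (α - 1 : ℝ)
  refine ⟨2 ^ (2 * finrank ℝ E + 12) * M, fun H K f hfm hf t ht x₁ x₂ x₃ x₄ ↦ ?_⟩
  grw [norm_gaussianConv_sub_sub_add_le (by positivity) hα hf hfm x₁ x₂ x₃ x₄]
  simp only [sqrt_mul_rpow_two_mul_rpow hc.le ht.le]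
  have hsecond : √c ^ (α - 2 : ℝ) ≤ M := le_add_of_nonneg_right (by positivity)
  have hfirst : √c ^ (α - 1 : ℝ) ≤ M := le_add_of_nonneg_left (by positivity)
  grw [hsecond, hfirst]
  exact le_of_eq (by ring)

end GaussianConv

section EuclideanSpace

variable {d : ℕ} {f : Euc d → ℝ}

lemma heatP_eq_gaussianConv (d : ℕ) (c H t : ℝ) (f : Euc d → ℝ) :
    heatP d c H t f = gaussianConv (c * t ^ (2 * H)) f := by
  ext x
  simp only [heatP, gaussianConv, convolution_lsmul_swap, gaussDensity, gaussianKernel,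
    finrank_euclideanSpace_fin, smul_eq_mul]

lemma holderNorm_nonneg (α : ℝ) : 0 ≤ holderNorm d α f :=
  add_nonneg (Real.iSup_nonneg fun _ ↦ abs_nonneg _) (Real.iSup_nonneg fun _ ↦ by positivity)

lemma abs_sub_le_holderNorm_mul {α C : ℝ} (hf : ∀ x y, |f x - f y| ≤ C * ‖x - y‖ ^ α)
    (x y : Euc d) : |f x - f y| ≤ holderNorm d α f * ‖x - y‖ ^ α := by
  rcases eq_or_ne x y with rfl | hxy
  · simpa using mul_nonneg (holderNorm_nonneg α) (Real.rpow_nonneg le_rfl α)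
  have hpos : ∀ {x y : Euc d}, x ≠ y → 0 < ‖x - y‖ ^ α := fun h ↦
    Real.rpow_pos_of_pos (norm_sub_pos_iff.2 h) α
  have hbdd : BddAbove (range fun q : {q : Euc d × Euc d // q.1 ≠ q.2} ↦
      |f q.1.1 - f q.1.2| / ‖q.1.1 - q.1.2‖ ^ α) := by
    refine ⟨C, ?_⟩
    rintro _ ⟨q, rfl⟩
    exact (div_le_iff₀ (hpos q.2)).2 (hf _ _)
  rw [← div_le_iff₀ (hpos hxy)]
  exact (le_ciSup hbdd ⟨(x, y), hxy⟩).trans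
    (le_add_of_nonneg_left (Real.iSup_nonneg fun _ ↦ abs_nonneg _))

lemma holderWith_holderNorm {α : ℝ≥0} (hbdd : ∃ C, ∀ x, |f x| ≤ C)
    (hf : 0 < (α : ℝ) → ∃ C, ∀ x y, |f x - f y| ≤ C * ‖x - y‖ ^ (α : ℝ)) :
    HolderWith (holderNorm d α f).toNNReal α f := by
  obtain ⟨C, hC⟩ : ∃ C, ∀ x y, |f x - f y| ≤ C * ‖x - y‖ ^ (α : ℝ) := by
    rcases α.coe_nonneg.eq_or_lt with hα | hα
    · obtain ⟨C, hC⟩ := hbdd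
      refine ⟨C + C, fun x y ↦ ?_⟩
      rw [← hα, Real.rpow_zero, mul_one]
      exact (abs_sub _ _).trans (add_le_add (hC x) (hC y))
    · exact hf hα
  refine holderWith_of_dist_le fun x y ↦ ?_
  rw [Real.coe_toNNReal _ (holderNorm_nonneg _), dist_eq_norm x y]
  exact abs_sub_le_holderNorm_mul hC x y

end EuclideanSpace

/-- **Second-order difference estimate for the Gaussian semigroup** (Lemma 3.3, (3.6)):
for `f ∈ C^α`, `α ∈ [0,1]`, and `t ∈ (0,1]`,
`|P_t^H f(x₁) - P_t^H f(x₂) - P_t^H f(x₃) + P_t^H f(x₄)|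
  ≤ N ‖f‖_{C^α} (t^{H(α-2)} |x₁-x₂||x₁-x₃| + t^{H(α-1)} |x₁-x₂-x₃+x₄|)`,
where `N = N(H, c, α, d)`. -/
theorem heat_second_difference_estimate
    (d : ℕ) (H c : ℝ) (hH : 0 < H) (hc : 0 < c)
    (α : ℝ) (hα0 : 0 ≤ α) (hα1 : α ≤ 1) :
    ∃ N : ℝ, ∀ f : Euc d → ℝ,
      -- `f ∈ C^α` : bounded measurable, and `α`-Hölder when `α > 0`
      Measurable f → (∃ C, ∀ x, |f x| ≤ C) →
      (0 < α → ∃ C, ∀ x y, |f x - f y| ≤ C * ‖x - y‖ ^ α) →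
      ∀ t : ℝ, 0 < t → t ≤ 1 → ∀ x₁ x₂ x₃ x₄ : Euc d,
        |heatP d c H t f x₁ - heatP d c H t f x₂
            - heatP d c H t f x₃ + heatP d c H t f x₄|
          ≤ N * holderNorm d α f *
              (t ^ (H * (α - 2)) * ‖x₁ - x₂‖ * ‖x₁ - x₃‖
                + t ^ (H * (α - 1)) * ‖x₁ - x₂ - x₃ + x₄‖) := by
  lift α to ℝ≥0 using hα0
  obtain ⟨N, hN⟩ := heat_second_difference_estimate_general (E := Euc d) (F := ℝ) hc
    (NNReal.coe_le_one.1 hα1)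
  refine ⟨N, fun f hfm hbdd hf t ht _ x₁ x₂ x₃ x₄ ↦ ?_⟩
  have hholder : HolderWith (holderNorm d α f).toNNReal α f := holderWith_holderNorm hbdd hf
  have hbound := hN H _ f hfm.aestronglyMeasurable hholder t ht x₁ x₂ x₃ x₄
  rw [Real.coe_toNNReal _ (holderNorm_nonneg _)] at hbound
  simpa only [heatP_eq_gaussianConv, Real.norm_eq_abs] using hbound
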